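/- There exists a constant C > 0 such that for every E ∈ (0, 4/25), ∫₀^{√(1 - √(1-4E))} dx / √(2E + x⁴/2 - x²) ≤ C. -/

import Mathlib

/-!
Put `s = √(1 - 4E)` and `a = √(1 - s)`. Then `2E + x⁴/2 - x² = (a² - x²) (1 + s - x²) / 2`, so the
only singularity of the integrand on `[0, a]` is that of `1 / √(a² - x²)`, whose integral is `π / 2`
whatever `a` is. The other factor satisfies `(1 + s - x²) / 2 ≥ s` for `|x| ≤ a`; hence the integral
is at most `π / (2√s)`, which stays bounded as long as `E` stays away from `1/4`.
-/

open MeasureTheory Real Set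

section InverseSqrt

variable {a m u v x : ℝ} {g : ℝ → ℝ}

theorem hasDerivAt_arcsin_div (hx : |x| < a) :
    HasDerivAt (fun y => arcsin (y / a)) (1 / √(a ^ 2 - x ^ 2)) x := by
  have ha : 0 < a := (abs_nonneg x).trans_lt hx
  have hxa : |x / a| < 1 := by rwa [abs_div, abs_of_pos ha, div_lt_one ha]
  obtain ⟨hgt, hlt⟩ := abs_lt.1 hxa
  refine ((hasDerivAt_arcsin hgt.ne' hlt.ne).comp x ((hasDerivAt_id x).div_const a)).congr_deriv ?_
  have hsq : a ^ 2 - x ^ 2 = a ^ 2 * (1 - (x / a) ^ 2) := by field_simp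
  rw [hsq, sqrt_mul (sq_nonneg a), sqrt_sq ha.le, one_div_mul_one_div, mul_comm]

theorem abs_lt_of_mem_Ioo_min_max (hu : u ∈ Icc (-a) a) (hv : v ∈ Icc (-a) a)
    (hx : x ∈ Ioo (min u v) (max u v)) : |x| < a :=
  abs_lt.2 ⟨(le_min hu.1 hv.1).trans_lt hx.1, hx.2.trans_le (max_le hu.2 hv.2)⟩

theorem intervalIntegrable_one_div_sqrt_sq_sub_sq (hu : u ∈ Icc (-a) a) (hv : v ∈ Icc (-a) a) :
    IntervalIntegrable (fun x => 1 / √(a ^ 2 - x ^ 2)) volume u v :=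
  intervalIntegral.intervalIntegrable_deriv_of_nonneg (g := fun y => arcsin (y / a)) (by fun_prop)
    (fun _ hx => hasDerivAt_arcsin_div (abs_lt_of_mem_Ioo_min_max hu hv hx))
    fun _ _ => by positivity

theorem integral_one_div_sqrt_sq_sub_sq (hu : u ∈ Icc (-a) a) (hv : v ∈ Icc (-a) a) :
    ∫ x in u..v, 1 / √(a ^ 2 - x ^ 2) = arcsin (v / a) - arcsin (u / a) :=
  intervalIntegral.integral_eq_sub_of_hasDeriv_right (f := fun y => arcsin (y / a)) (by fun_prop)
    (fun _ hx => (hasDerivAt_arcsin_div (abs_lt_of_mem_Ioo_min_max hu hv hx)).hasDerivWithinAt)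
    (intervalIntegrable_one_div_sqrt_sq_sub_sq hu hv)

theorem one_div_sqrt_mul_le {p q : ℝ} (hp : 0 ≤ p) (hm : 0 < m) (hmq : m ≤ q) :
    1 / √(p * q) ≤ 1 / √p / √m := by
  rw [sqrt_mul hp, ← div_div]
  gcongr

theorem one_div_sqrt_sq_sub_sq_mul_le (hau : -a ≤ u) (hva : v ≤ a) (hm : 0 < m)
    (hmg : ∀ x ∈ Icc u v, m ≤ g x) (hx : x ∈ Icc u v) :
    1 / √((a ^ 2 - x ^ 2) * g x) ≤ 1 / √(a ^ 2 - x ^ 2) / √m :=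
  have hxa : x ^ 2 ≤ a ^ 2 := sq_le_sq' (hau.trans hx.1) (hx.2.trans hva)
  one_div_sqrt_mul_le (sub_nonneg.2 hxa) hm (hmg x hx)

theorem intervalIntegrable_one_div_sqrt_sq_sub_sq_mul (hau : -a ≤ u) (huv : u ≤ v) (hva : v ≤ a)
    (hg : Measurable g) (hm : 0 < m) (hmg : ∀ x ∈ Icc u v, m ≤ g x) :
    IntervalIntegrable (fun x => 1 / √((a ^ 2 - x ^ 2) * g x)) volume u v := by
  have hint := intervalIntegrable_one_div_sqrt_sq_sub_sq ⟨hau, huv.trans hva⟩ ⟨hau.trans huv, hva⟩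
  refine (hint.div_const √m).mono_fun' (Measurable.aestronglyMeasurable (by fun_prop)) ?_
  filter_upwards [ae_restrict_mem measurableSet_uIoc] with x hx
  rw [uIoc_of_le huv] at hx
  rw [norm_of_nonneg (by positivity)]
  exact one_div_sqrt_sq_sub_sq_mul_le hau hva hm hmg (Ioc_subset_Icc_self hx)

theorem integral_one_div_sqrt_sq_sub_sq_mul_le (hau : -a ≤ u) (huv : u ≤ v) (hva : v ≤ a)
    (hg : Measurable g) (hm : 0 < m) (hmg : ∀ x ∈ Icc u v, m ≤ g x) :
    ∫ x in u..v, 1 / √((a ^ 2 - x ^ 2) * g x) ≤ (arcsin (v / a) - arcsin (u / a)) / √m := by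
  have hu : u ∈ Icc (-a) a := ⟨hau, huv.trans hva⟩
  have hv : v ∈ Icc (-a) a := ⟨hau.trans huv, hva⟩
  rw [← integral_one_div_sqrt_sq_sub_sq hu hv, ← intervalIntegral.integral_div]
  exact intervalIntegral.integral_mono_on huv
    (intervalIntegrable_one_div_sqrt_sq_sub_sq_mul hau huv hva hg hm hmg)
    ((intervalIntegrable_one_div_sqrt_sq_sub_sq hu hv).div_const _)
    fun _ hx => one_div_sqrt_sq_sub_sq_mul_le hau hva hm hmg hx

end InverseSqrt

theorem two_mul_add_pow_four_div_two_sub_sq_eq_mul {a s E : ℝ} (ha : a ^ 2 = 1 - s)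
    (hs : s ^ 2 = 1 - 4 * E) (x : ℝ) :
    2 * E + x ^ 4 / 2 - x ^ 2 = (a ^ 2 - x ^ 2) * ((1 + s - x ^ 2) / 2) := by
  rw [ha]
  linear_combination hs / 2

theorem time_integral_le {E : ℝ} (hE₀ : 0 ≤ E) (hE : E < 1 / 4) :
    ∫ x in (0 : ℝ)..√(1 - √(1 - 4 * E)), 1 / √(2 * E + x ^ 4 / 2 - x ^ 2) ≤
      π / 2 / √√(1 - 4 * E) := by
  set s := √(1 - 4 * E)
  have hs : s ^ 2 = 1 - 4 * E := sq_sqrt (by linarith)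
  have hs_pos : 0 < s := sqrt_pos.2 (by linarith)
  have hs_le : s ≤ 1 := sqrt_le_one.2 (by linarith)
  set a := √(1 - s)
  have ha : a ^ 2 = 1 - s := sq_sqrt (by linarith)
  have ha_nonneg : 0 ≤ a := sqrt_nonneg _
  have hs_le_factor : ∀ x ∈ Icc 0 a, s ≤ (1 + s - x ^ 2) / 2 := fun x hx => by
    have hxa : x ^ 2 ≤ a ^ 2 := pow_le_pow_left₀ hx.1 hx.2 2
    linarith
  simp only [two_mul_add_pow_four_div_two_sub_sq_eq_mul ha hs]
  calc ∫ x in (0 : ℝ)..a, 1 / √((a ^ 2 - x ^ 2) * ((1 + s - x ^ 2) / 2))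
      ≤ (arcsin (a / a) - arcsin (0 / a)) / √s :=
        integral_one_div_sqrt_sq_sub_sq_mul_le (by linarith) ha_nonneg le_rfl (by fun_prop)
          hs_pos hs_le_factor
    _ ≤ π / 2 / √s := by
        rw [zero_div, arcsin_zero, sub_zero]
        gcongr
        exact arcsin_le_pi_div_two _

theorem time_integral_uniform_bound_general {E₀ : ℝ} (hE₀ : E₀ < 1 / 4) :
    ∃ C > (0 : ℝ), ∀ E : ℝ, 0 ≤ E → E ≤ E₀ →
      ∫ x in (0 : ℝ)..√(1 - √(1 - 4 * E)), 1 / √(2 * E + x ^ 4 / 2 - x ^ 2) ≤ C := by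
  have hpos : 0 < √√(1 - 4 * E₀) := sqrt_pos.2 (sqrt_pos.2 (by linarith))
  refine ⟨π / 2 / √√(1 - 4 * E₀), by positivity, fun E hE hEE₀ => ?_⟩
  exact (time_integral_le hE (hEE₀.trans_lt hE₀)).trans (by gcongr)

theorem time_integral_uniform_bound :
    ∃ C > (0 : ℝ), ∀ E : ℝ, 0 < E → E < 4 / 25 →
      (∫ x in (0 : ℝ)..Real.sqrt (1 - Real.sqrt (1 - 4 * E)),
        1 / Real.sqrt (2 * E + x ^ 4 / 2 - x ^ 2)) ≤ C := by
  obtain ⟨C, hC, hbound⟩ := time_integral_uniform_bound_general (E₀ := 4 / 25) (by norm_num)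
  exact ⟨C, hC, fun E hE hE' => hbound E hE.le hE'.le⟩
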